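/- Let A ∈ ℝ^{m×n} be partitioned in blocks A = [[A11, A12],[A21, A22]] with A11 ∈ ℝ^{k×k} invertible (any row/column permutations are absorbed into the partition), and let A_k = [[A11, A12],[A21, A21·A11⁻¹·A12]] be the rank-k approximant of the partial LU factorization. If A11 is a local maximum volume k×k submatrix of A, then for every 1 ≤ j ≤ k: (1/(1 + 5k√(mn)))·σ_j(A) ≤ σ_j(A_k) ≤ (1 + 5k√(mn))·σ_j(A). -/

import Mathlib

open Matrix

/-- The spectral norm (`‖·‖₂`, largest singular value) of a real matrix. -/
noncomputable def specNorm {m n : Type*} [Fintype m] [Fintype n] [DecidableEq n]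
    (A : Matrix m n ℝ) : ℝ :=
  ‖LinearMap.toContinuousLinearMap (Matrix.toEuclideanLin A)‖

/-- `sval A j` is the `j`-th largest singular value of `A` (1-indexed), characterized as the
distance, in the spectral norm, from `A` to the set of matrices of rank `< j`. -/
noncomputable def sval {m n : Type*} [Fintype m] [Fintype n] [DecidableEq n]
    (A : Matrix m n ℝ) (j : ℕ) : ℝ :=
  sInf {x : ℝ | ∃ B : Matrix m n ℝ, B.rank < j ∧ x = specNorm (A - B)}

/-- The volume of a matrix: the product of its singular values. -/
noncomputable def vol {m n : Type*} [Fintype m] [Fintype n] [DecidableEq n]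
    (A : Matrix m n ℝ) : ℝ :=
  ∏ j ∈ Finset.Icc 1 (min (Fintype.card m) (Fintype.card n)), sval A j

/-- `DiffOne b r` : `r` is an injective selection of indices whose image (index set)
differs from the index set selected by `b` in at most one element. -/
def DiffOne {ι α : Type*} [Fintype ι] [DecidableEq α] (b r : ι → α) : Prop :=
  Function.Injective r ∧ (Finset.univ.image r \ Finset.univ.image b).card ≤ 1

/-!
Write `A = [[M, B], [C, D]]` with Schur complement `S = D - C M⁻¹ B`, so that `A - A_k` is `S`
padded by zeros. By Eckart–Young the numbers `sval` are the usual singular values, so the volume of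
a square matrix is `|det|`. By Cramer's rule, exchanging row `b` of `M` for row `p` below it
multiplies `det M` by `(C M⁻¹)_{pb}`, exchanging column `a` for column `q` multiplies it by
`(M⁻¹ B)_{aq}`, and doing both multiplies it by
`(C M⁻¹)_{pb} (M⁻¹ B)_{aq} + S_{pq} (M⁻¹)_{ab}`. Local maximality bounds all three factors by `1`
in absolute value, hence `|S_{pq}| |(M⁻¹)_{ab}| ≤ 2`. Letting `a, b` vary and bounding spectral
norms by entries gives `‖A - A_k‖ ≤ 2 k √(m n) / ‖M⁻¹‖`. Since `σ_j ≥ σ_k(M) = 1 / ‖M⁻¹‖` for both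
`A` and `A_k`, Weyl's inequality for `σ_j` turns this into a relative error, with the constant `2`
in place of `5`.
-/

section EckartYoung

open Module
open scoped InnerProductSpace

variable {𝕜 E F : Type*} [RCLike 𝕜] [NormedAddCommGroup E] [InnerProductSpace 𝕜 E]
  [FiniteDimensional 𝕜 E] [NormedAddCommGroup F] [InnerProductSpace 𝕜 F] [FiniteDimensional 𝕜 F]

/-- The orthonormal basis of right singular vectors of `T`, in the (decreasing) order of
`T.singularValues`. -/
noncomputable def rightSingularBasis (T : E →ₗ[𝕜] F) :
    OrthonormalBasis (Fin (finrank 𝕜 E)) 𝕜 E :=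
  T.isSymmetric_adjoint_comp_self.eigenvectorBasis rfl

lemma adjoint_apply_rightSingularBasis (T : E →ₗ[𝕜] F) (i : Fin (finrank 𝕜 E)) :
    LinearMap.adjoint T (T (rightSingularBasis T i)) =
      ((T.singularValues i ^ 2 : ℝ) : 𝕜) • rightSingularBasis T i := by
  rw [T.sq_singularValues_fin rfl]
  exact T.isSymmetric_adjoint_comp_self.apply_eigenvectorBasis rfl i

lemma norm_sq_apply_eq_sum_singularValues (T : E →ₗ[𝕜] F) (x : E) :
    ‖T x‖ ^ 2 =
      ∑ i : Fin (finrank 𝕜 E), T.singularValues i ^ 2 * ‖⟪rightSingularBasis T i, x⟫_𝕜‖ ^ 2 := by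
  set v := rightSingularBasis T
  have coord (i : Fin (finrank 𝕜 E)) :
      ⟪v i, LinearMap.adjoint T (T x)⟫_𝕜 = (T.singularValues i ^ 2 : ℝ) * ⟪v i, x⟫_𝕜 := by
    rw [LinearMap.adjoint_inner_right, ← LinearMap.adjoint_inner_left,
      adjoint_apply_rightSingularBasis, inner_smul_left, RCLike.conj_ofReal]
  have expand : (‖T x‖ ^ 2 : 𝕜) =
      ∑ i : Fin (finrank 𝕜 E), (T.singularValues i ^ 2 * ‖⟪v i, x⟫_𝕜‖ ^ 2 : ℝ) := by
    rw [← inner_self_eq_norm_sq_to_K, ← LinearMap.adjoint_inner_right, ← v.sum_inner_mul_inner]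
    push_cast
    refine Finset.sum_congr rfl fun i _ ↦ ?_
    rw [coord, ← RCLike.conj_mul, inner_conj_symm]
    push_cast
    ring
  exact_mod_cast expand

lemma norm_apply_le_singularValues_mul_norm (T : E →ₗ[𝕜] F) {j : ℕ} {x : E}
    (hx : ∀ i : Fin (finrank 𝕜 E), i < j → ⟪rightSingularBasis T i, x⟫_𝕜 = 0) :
    ‖T x‖ ≤ T.singularValues j * ‖x‖ := by
  refine le_of_sq_le_sq ?_ (mul_nonneg (T.singularValues_nonneg j) (norm_nonneg x))
  rw [norm_sq_apply_eq_sum_singularValues, mul_pow,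
    ← (rightSingularBasis T).sum_sq_norm_inner_right, Finset.mul_sum]
  refine Finset.sum_le_sum fun i _ ↦ ?_
  obtain hi | hi := lt_or_ge (i : ℕ) j
  · simp [hx i hi]
  · gcongr
    exacts [T.singularValues_nonneg i, T.singularValues_antitone hi]

lemma singularValues_mul_norm_le_norm_apply (T : E →ₗ[𝕜] F) {j : ℕ} {x : E}
    (hx : ∀ i : Fin (finrank 𝕜 E), j < i → ⟪rightSingularBasis T i, x⟫_𝕜 = 0) :
    T.singularValues j * ‖x‖ ≤ ‖T x‖ := by
  refine le_of_sq_le_sq ?_ (norm_nonneg _)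
  rw [norm_sq_apply_eq_sum_singularValues, mul_pow,
    ← (rightSingularBasis T).sum_sq_norm_inner_right, Finset.mul_sum]
  refine Finset.sum_le_sum fun i _ ↦ ?_
  obtain hi | hi := lt_or_ge j (i : ℕ)
  · simp [hx i hi]
  · gcongr
    exacts [T.singularValues_nonneg j, T.singularValues_antitone hi]

lemma exists_finrank_range_le_norm_sub_le_singularValues (T : E →ₗ[𝕜] F) (j : ℕ) :
    ∃ S : E →ₗ[𝕜] F, finrank 𝕜 S.range ≤ j ∧
      ‖(T - S).toContinuousLinearMap‖ ≤ T.singularValues j := by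
  set v := rightSingularBasis T
  let U : Submodule 𝕜 E :=
    Submodule.span 𝕜 (Set.range fun i : {i : Fin (finrank 𝕜 E) // i < j} ↦ v i)
  refine ⟨T ∘ₗ U.starProjection, ?_, ContinuousLinearMap.opNorm_le_bound _
    (T.singularValues_nonneg j) fun x ↦ ?_⟩
  · calc
      finrank 𝕜 (T ∘ₗ U.starProjection.toLinearMap).range
        ≤ finrank 𝕜 U.starProjection.toLinearMap.range := by
          rw [LinearMap.range_comp]
          exact Submodule.finrank_map_le _ _
      _ = finrank 𝕜 U := by rw [Submodule.range_starProjection]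
      _ ≤ Fintype.card {i : Fin (finrank 𝕜 E) // i < j} := finrank_range_le_card _
      _ ≤ j := by
        rw [Fintype.card_subtype, Fin.card_filter_val_lt]
        exact min_le_right _ _
  · have mem_U (i : Fin (finrank 𝕜 E)) (hi : i < j) : v i ∈ U :=
      Submodule.subset_span ⟨⟨i, hi⟩, rfl⟩
    have residual_orthogonal (i : Fin (finrank 𝕜 E)) (hi : i < j) :
        ⟪v i, Uᗮ.starProjection x⟫_𝕜 = 0 :=
      Submodule.inner_right_of_mem_orthogonal (mem_U i hi) (Submodule.starProjection_apply_mem _ x)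
    calc
      ‖(T - T ∘ₗ U.starProjection).toContinuousLinearMap x‖ = ‖T (Uᗮ.starProjection x)‖ := by
        simp [Submodule.starProjection_orthogonal']
      _ ≤ T.singularValues j * ‖Uᗮ.starProjection x‖ :=
        norm_apply_le_singularValues_mul_norm T residual_orthogonal
      _ ≤ T.singularValues j * ‖x‖ := by
        gcongr
        exacts [T.singularValues_nonneg j, Submodule.norm_starProjection_apply_le _ x]

lemma singularValues_le_norm_sub_of_finrank_range_le (T S : E →ₗ[𝕜] F) {j : ℕ}
    (hS : finrank 𝕜 S.range ≤ j) :
    T.singularValues j ≤ ‖(T - S).toContinuousLinearMap‖ := by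
  obtain hj | hj := le_or_gt (finrank 𝕜 E) j
  · rw [T.singularValues_of_finrank_le hj]
    exact norm_nonneg _
  set v := rightSingularBasis T
  let f : E →ₗ[𝕜] S.range × ({i : Fin (finrank 𝕜 E) // j < i} → 𝕜) :=
    S.rangeRestrict.prod (LinearMap.pi fun i ↦ innerₛₗ 𝕜 (v i))
  obtain ⟨x, hx, hx0⟩ : ∃ x ∈ f.ker, x ≠ 0 := by
    refine (Submodule.ne_bot_iff _).mp (LinearMap.ker_ne_bot_of_finrank_lt ?_)
    have card_lt : Fintype.card {i : Fin (finrank 𝕜 E) // j < i} < finrank 𝕜 E - j := by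
      rw [Fintype.card_subtype,
        show Finset.univ.filter (fun i : Fin (finrank 𝕜 E) ↦ j < i) = Finset.Ioi ⟨j, hj⟩ by
          ext; simp [Fin.lt_def],
        Fin.card_Ioi]
      dsimp only
      omega
    rw [finrank_prod, finrank_fintype_fun_eq_card]
    omega
  have hSx : S x = 0 := congrArg (fun y ↦ (y.1 : F)) hx
  have hvx (i : Fin (finrank 𝕜 E)) (hi : j < i) : ⟪v i, x⟫_𝕜 = 0 :=
    congrFun (congrArg Prod.snd hx) ⟨i, hi⟩
  have bound : T.singularValues j * ‖x‖ ≤ ‖(T - S).toContinuousLinearMap‖ * ‖x‖ :=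
    calc
      T.singularValues j * ‖x‖ ≤ ‖T x‖ := singularValues_mul_norm_le_norm_apply T hvx
      _ = ‖(T - S).toContinuousLinearMap x‖ := by simp [hSx]
      _ ≤ _ := ContinuousLinearMap.le_opNorm _ x
  exact le_of_mul_le_mul_right bound (norm_pos_iff.mpr hx0)

end EckartYoung

section L2OpNorm

open scoped Matrix.Norms.L2Operator

variable {𝕜 l m n o : Type*} [RCLike 𝕜] [Fintype l] [Fintype m] [Fintype n] [Fintype o]
  [DecidableEq n] [DecidableEq o]

lemma l2_opNorm_le_sqrt_card_mul_of_norm_apply_le {A : Matrix m n 𝕜} {c : ℝ} (hc : 0 ≤ c)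
    (hA : ∀ i j, ‖A i j‖ ≤ c) : ‖A‖ ≤ √(Fintype.card m * Fintype.card n) * c := by
  refine ContinuousLinearMap.opNorm_le_bound _ (by positivity) fun x ↦ ?_
  refine le_of_sq_le_sq ?_ (by positivity)
  have row_bound (i : m) : ‖(A *ᵥ x) i‖ ^ 2 ≤ Fintype.card n * c ^ 2 * ‖x‖ ^ 2 := by
    calc
      ‖(A *ᵥ x) i‖ ^ 2 ≤ (∑ j, ‖A i j‖ * ‖x j‖) ^ 2 := by
        gcongr
        exact (norm_sum_le _ _).trans_eq (by simp only [norm_mul])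
      _ ≤ (∑ j, ‖A i j‖ ^ 2) * ∑ j, ‖x j‖ ^ 2 := Finset.sum_mul_sq_le_sq_mul_sq _ _ _
      _ ≤ (∑ _j : n, c ^ 2) * ∑ j, ‖x j‖ ^ 2 := by gcongr with j; exact hA i j
      _ = Fintype.card n * c ^ 2 * ‖x‖ ^ 2 := by simp [EuclideanSpace.norm_sq_eq]
  calc
    ‖toEuclideanLin A x‖ ^ 2 = ∑ i, ‖(A *ᵥ x) i‖ ^ 2 := EuclideanSpace.norm_sq_eq _
    _ ≤ ∑ _i : m, Fintype.card n * c ^ 2 * ‖x‖ ^ 2 := by gcongr with i; exact row_bound i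
    _ = (√(Fintype.card m * Fintype.card n) * c * ‖x‖) ^ 2 := by
      rw [mul_pow, mul_pow, Real.sq_sqrt (by positivity)]
      simp [mul_assoc]

lemma l2_opNorm_one_submatrix_le_one {c : o → n} (hc : c.Injective) :
    ‖(1 : Matrix n n 𝕜).submatrix id c‖ ≤ 1 := by
  have isometry :
      ((1 : Matrix n n 𝕜).submatrix id c)ᴴ * (1 : Matrix n n 𝕜).submatrix id c = 1 := by
    rw [conjTranspose_submatrix, conjTranspose_one,
      ← submatrix_mul _ _ c id c Function.bijective_id, Matrix.one_mul, submatrix_one c hc]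
  have norm_one : ‖(1 : Matrix o o 𝕜)‖ ≤ 1 := by
    rw [← diagonal_one, l2_opNorm_diagonal]
    exact (pi_norm_le_iff_of_nonneg zero_le_one).mpr fun _ ↦ by simp
  rwa [← isometry, l2_opNorm_conjTranspose_mul_self, ← abs_le_one_iff_mul_self_le_one,
    abs_norm] at norm_one

lemma l2_opNorm_submatrix_le (A : Matrix m n 𝕜) {r : l → m} {c : o → n} (hr : r.Injective)
    (hc : c.Injective) : ‖A.submatrix r c‖ ≤ ‖A‖ := by
  classical
  have factor : A.submatrix r c =
      ((1 : Matrix m m 𝕜).submatrix id r)ᴴ * (A * (1 : Matrix n n 𝕜).submatrix id c) := by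
    rw [conjTranspose_submatrix, conjTranspose_one]
    nth_rw 1 [← Matrix.one_mul A, ← Matrix.mul_one A]
    rw [submatrix_mul _ _ r id c Function.bijective_id,
      submatrix_mul _ _ id id c Function.bijective_id, submatrix_id_id]
  calc
    ‖A.submatrix r c‖
      ≤ ‖((1 : Matrix m m 𝕜).submatrix id r)ᴴ‖ * (‖A‖ * ‖(1 : Matrix n n 𝕜).submatrix id c‖) := by
        rw [factor]
        grw [l2_opNorm_mul, l2_opNorm_mul]
    _ ≤ 1 * (‖A‖ * 1) := by
        rw [l2_opNorm_conjTranspose]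
        gcongr
        exacts [l2_opNorm_one_submatrix_le_one hr, l2_opNorm_one_submatrix_le_one hc]
    _ = ‖A‖ := by ring

end L2OpNorm

section SingularValues

open scoped Matrix.Norms.L2Operator

variable {l m n o : Type*} [Fintype l] [Fintype m] [Fintype n] [Fintype o]
  [DecidableEq n] [DecidableEq o] {j : ℕ}

-- `specNorm` is definitionally the norm of `Matrix.Norms.L2Operator`, used instead from here on.
lemma sval_le_norm_sub (A : Matrix m n ℝ) {B : Matrix m n ℝ} (h : B.rank < j) :
    sval A j ≤ ‖A - B‖ :=
  csInf_le ⟨0, by rintro _ ⟨C, -, rfl⟩; exact norm_nonneg (A - C)⟩ ⟨B, h, rfl⟩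

lemma le_sval {A : Matrix m n ℝ} {c : ℝ} (hj : 0 < j)
    (h : ∀ B : Matrix m n ℝ, B.rank < j → c ≤ ‖A - B‖) : c ≤ sval A j :=
  le_csInf ⟨_, 0, by rwa [rank_zero], rfl⟩ (by rintro _ ⟨B, hB, rfl⟩; exact h B hB)

lemma sval_nonneg (A : Matrix m n ℝ) (j : ℕ) : 0 ≤ sval A j :=
  Real.sInf_nonneg (by rintro _ ⟨B, -, rfl⟩; exact norm_nonneg (A - B))

lemma sval_le_sval_add_norm_sub (A C : Matrix m n ℝ) (hj : 0 < j) :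
    sval A j ≤ sval C j + ‖A - C‖ := by
  rw [← sub_le_iff_le_add]
  refine le_sval hj fun B hB ↦ sub_le_iff_le_add'.mpr ?_
  calc
    sval A j ≤ ‖A - B‖ := sval_le_norm_sub A hB
    _ ≤ ‖A - C‖ + ‖C - B‖ := norm_sub_le_norm_sub_add_norm_sub A C B

lemma sval_le_one_add_mul_sval {A C : Matrix m n ℝ} {s t : ℝ} (hj : 0 < j) (ht : 0 ≤ t)
    (hAC : ‖A - C‖ ≤ t * s) (hs : s ≤ sval C j) : sval A j ≤ (1 + t) * sval C j := by
  calc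
    sval A j ≤ sval C j + ‖A - C‖ := sval_le_sval_add_norm_sub A C hj
    _ ≤ sval C j + t * sval C j := by grw [hAC, hs]
    _ = (1 + t) * sval C j := by ring

lemma sval_submatrix_le (A : Matrix m n ℝ) {r : l → m} {c : o → n} (hr : r.Injective)
    (hc : c.Injective) (hj : 0 < j) : sval (A.submatrix r c) j ≤ sval A j :=
  le_sval hj fun B hB ↦
    calc
      sval (A.submatrix r c) j ≤ ‖A.submatrix r c - B.submatrix r c‖ :=
        sval_le_norm_sub _ ((rank_submatrix_le B r c).trans_lt hB)
      _ = ‖(A - B).submatrix r c‖ := by rw [submatrix_sub, Pi.sub_apply, Pi.sub_apply]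
      _ ≤ ‖A - B‖ := l2_opNorm_submatrix_le _ hr hc

lemma inv_norm_inv_le_sval {M : Matrix n n ℝ} (hM : IsUnit M.det) (hj : 0 < j)
    (hjn : j ≤ Fintype.card n) : ‖M⁻¹‖⁻¹ ≤ sval M j := by
  refine le_sval hj fun B hB ↦ ?_
  by_contra! close
  have small : ‖1 - M⁻¹ * B‖ < 1 := by
    calc
      ‖1 - M⁻¹ * B‖ = ‖M⁻¹ * (M - B)‖ := by rw [mul_sub, nonsing_inv_mul M hM]
      _ ≤ ‖M⁻¹‖ * ‖M - B‖ := l2_opNorm_mul _ _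
      _ < 1 := by
        have pos : 0 < ‖M⁻¹‖ := inv_pos.mp ((norm_nonneg _).trans_lt close)
        rwa [← lt_inv_mul_iff₀ pos, mul_one]
  have isUnit_inv_mul : IsUnit (M⁻¹ * B) := by
    simpa only [sub_sub_cancel] using isUnit_one_sub_of_norm_lt_one small
  have isUnit_B : IsUnit B := isUnit_of_mul_isUnit_right isUnit_inv_mul
  rw [rank_of_isUnit B isUnit_B] at hB
  omega

lemma inv_norm_inv_le_sval_fromBlocks {ι : Type*} [Fintype ι] [DecidableEq ι] {M : Matrix ι ι ℝ}
    (hM : IsUnit M.det) (B : Matrix ι n ℝ) (C : Matrix m ι ℝ) (D : Matrix m n ℝ) (hj : 0 < j)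
    (hjι : j ≤ Fintype.card ι) : ‖M⁻¹‖⁻¹ ≤ sval (fromBlocks M B C D) j := by
  calc
    ‖M⁻¹‖⁻¹ ≤ sval M j := inv_norm_inv_le_sval hM hj hjι
    _ = sval ((fromBlocks M B C D).submatrix Sum.inl Sum.inl) j := rfl
    _ ≤ sval (fromBlocks M B C D) j :=
      sval_submatrix_le _ Sum.inl_injective Sum.inl_injective hj

lemma sval_add_one_eq_singularValues (A : Matrix m n ℝ) (j : ℕ) :
    sval A (j + 1) = A.toEuclideanLin.singularValues j := by
  classical
  have rank_eq (B : Matrix m n ℝ) : B.rank = Module.finrank ℝ B.toEuclideanLin.range :=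
    rank_eq_finrank_range_toLin B (PiLp.basisFun 2 ℝ m) (PiLp.basisFun 2 ℝ n)
  refine le_antisymm ?_ (le_sval j.succ_pos fun B hB ↦ ?_)
  · obtain ⟨S, hS, norm_le⟩ :=
      exists_finrank_range_le_norm_sub_le_singularValues A.toEuclideanLin j
    obtain ⟨B, rfl⟩ := toEuclideanLin.surjective S
    rw [← map_sub] at norm_le
    exact (sval_le_norm_sub A (by rw [rank_eq]; omega)).trans norm_le
  · rw [l2_opNorm_def, LinearEquiv.trans_apply, map_sub]
    exact singularValues_le_norm_sub_of_finrank_range_le _ _ (by rw [← rank_eq]; omega)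

lemma vol_eq_abs_det (M : Matrix n n ℝ) : vol M = |M.det| := by
  have det_toEuclideanLin : LinearMap.det M.toEuclideanLin = M.det :=
    LinearMap.det_toLin (PiLp.basisFun 2 ℝ n) M
  calc
    vol M = ∏ i ∈ Finset.range (Fintype.card n), sval M (i + 1) := by
      rw [vol, min_self, ← Finset.Ico_add_one_right_eq_Icc, Finset.prod_Ico_eq_prod_range]
      simp only [add_tsub_cancel_right, add_comm]
    _ = ∏ i ∈ Finset.range (Fintype.card n), M.toEuclideanLin.singularValues i := by
      simp only [sval_add_one_eq_singularValues]
    _ = M.toEuclideanLin.normDet := by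
      rw [LinearMap.normDet_eq_prod_singularValues, finrank_euclideanSpace]
    _ = |M.det| := by rw [LinearMap.normDet_eq_abs_det, det_toEuclideanLin]

end SingularValues

section Exchange

variable {R ι : Type*} [CommRing R] [Fintype ι] [DecidableEq ι] {M : Matrix ι ι R}

lemma det_updateRow_eq_det_mul_vecMul_inv (hM : IsUnit M.det) (b : ι) (u : ι → R) :
    (M.updateRow b u).det = M.det * (u ᵥ* M⁻¹) b := by
  rw [← cramer_transpose_apply, ← det_smul_inv_vecMul_eq_cramer_transpose M u hM, Pi.smul_apply,
    smul_eq_mul]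

lemma det_updateCol_eq_det_mul_inv_mulVec (hM : IsUnit M.det) (a : ι) (v : ι → R) :
    (M.updateCol a v).det = M.det * (M⁻¹ *ᵥ v) a := by
  rw [← cramer_apply, ← det_smul_inv_mulVec_eq_cramer M v hM, Pi.smul_apply, smul_eq_mul]

lemma adjugate_updateRow_apply_self (M : Matrix ι ι R) (a b : ι) (u : ι → R) :
    (M.updateRow b u).adjugate a b = M.adjugate a b := by
  rw [adjugate_apply, adjugate_apply, updateRow_idem]

lemma adjugate_updateCol_apply_self (M : Matrix ι ι R) (a b : ι) (v : ι → R) :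
    (M.updateCol a v).adjugate a b = M.adjugate a b := by
  rw [← transpose_apply (adjugate _), adjugate_transpose, ← updateRow_transpose,
    adjugate_updateRow_apply_self, ← adjugate_transpose, transpose_apply]

lemma adjugate_eq_det_smul_inv (hM : IsUnit M.det) : M.adjugate = M.det • M⁻¹ := by
  rw [inv_def, smul_smul, Ring.mul_inverse_cancel _ hM, one_smul]

lemma det_updateRow_updateCol (hM : IsUnit M.det) (a b : ι) (u v : ι → R) (α : R) :
    ((M.updateCol a v).updateRow b (Function.update u a α)).det =
      M.det * ((u ᵥ* M⁻¹) b * (M⁻¹ *ᵥ v) a + (α - u ᵥ* M⁻¹ ⬝ᵥ v) * M⁻¹ a b) := by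
  set P := M.updateCol a v
  set w := u ᵥ* M⁻¹
  have new_row : Function.update u a α = ∑ i, w i • P i + (α - w ⬝ᵥ v) • Pi.single a 1 := by
    rw [← vecMul_eq_sum, vecMul_updateCol, vecMul_vecMul, nonsing_inv_mul M hM, vecMul_one]
    ext i
    obtain rfl | hi := eq_or_ne i a <;> simp [*]
  calc
    (P.updateRow b (Function.update u a α)).det
      = w b * P.det + (α - w ⬝ᵥ v) * P.adjugate a b := by
        rw [new_row, det_updateRow_add, det_updateRow_sum, det_updateRow_smul, smul_eq_mul,
          adjugate_apply]
    _ = w b * (M.det * (M⁻¹ *ᵥ v) a) + (α - w ⬝ᵥ v) * (M.det * M⁻¹ a b) := by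
        rw [adjugate_updateCol_apply_self, adjugate_eq_det_smul_inv hM, Matrix.smul_apply,
          smul_eq_mul, det_updateCol_eq_det_mul_inv_mulVec hM]
    _ = M.det * (w b * (M⁻¹ *ᵥ v) a + (α - w ⬝ᵥ v) * M⁻¹ a b) := by ring

end Exchange

section FromBlocks

variable {α ι m n : Type*} [DecidableEq ι] (A : Matrix ι ι α) (B : Matrix ι n α)
  (C : Matrix m ι α) (D : Matrix m n α)

lemma fromBlocks_submatrix_update_inl_left (b : ι) (p : m) :
    (fromBlocks A B C D).submatrix (Function.update Sum.inl b (Sum.inr p)) Sum.inl =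
      A.updateRow b (C p) := by
  ext i j
  obtain rfl | hi := eq_or_ne i b <;> simp [*]

lemma fromBlocks_submatrix_update_inl_right (a : ι) (q : n) :
    (fromBlocks A B C D).submatrix Sum.inl (Function.update Sum.inl a (Sum.inr q)) =
      A.updateCol a (B.col q) := by
  ext i j
  obtain rfl | hj := eq_or_ne j a <;> simp [*]

lemma fromBlocks_submatrix_update_inl_update_inl (a b : ι) (p : m) (q : n) :
    (fromBlocks A B C D).submatrix (Function.update Sum.inl b (Sum.inr p))
        (Function.update Sum.inl a (Sum.inr q)) =
      (A.updateCol a (B.col q)).updateRow b (Function.update (C p) a (D p q)) := by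
  ext i j
  obtain rfl | hi := eq_or_ne i b <;> obtain rfl | hj := eq_or_ne j a <;> simp [*]

end FromBlocks

section LocalMaxVol

variable {ι κ m n : Type*} [Fintype ι] [Fintype κ] [DecidableEq m] [DecidableEq n]

lemma diffOne_self {r : ι → m} (hr : r.Injective) : DiffOne r r :=
  ⟨hr, by simp⟩

lemma diffOne_update [DecidableEq ι] {r : ι → m} (hr : r.Injective) (b : ι) {x : m}
    (hx : x ∉ Set.range r) : DiffOne r (Function.update r b x) := by
  have new_subset : Finset.univ.image (Function.update r b x) \ Finset.univ.image r ⊆ {x} := by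
    grind
  exact ⟨by grind [Function.Injective], (Finset.card_le_card new_subset).trans_eq (by simp)⟩

/-- The submatrix of `A` on the rows `r₀` and columns `c₀` (injective selections of indices) is a
local maximum volume submatrix: its volume is positive and does not increase when at most one row
and at most one column are exchanged. -/
def IsLocalMaxVol [DecidableEq κ] (A : Matrix m n ℝ) (r₀ : ι → m) (c₀ : κ → n) : Prop :=
  0 < vol (A.submatrix r₀ c₀) ∧ ∀ (r : ι → m) (c : κ → n), DiffOne r₀ r → DiffOne c₀ c →
    vol (A.submatrix r c) ≤ vol (A.submatrix r₀ c₀)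

namespace IsLocalMaxVol

variable [DecidableEq ι]

lemma abs_det_submatrix_le {A : Matrix m n ℝ} {r₀ r : ι → m} {c₀ c : ι → n}
    (h : IsLocalMaxVol A r₀ c₀) (hr : DiffOne r₀ r) (hc : DiffOne c₀ c) :
    |(A.submatrix r c).det| ≤ |(A.submatrix r₀ c₀).det| := by
  simpa only [vol_eq_abs_det] using h.2 r c hr hc

variable {M : Matrix ι ι ℝ} {B : Matrix ι n ℝ} {C : Matrix m ι ℝ} {D : Matrix m n ℝ}

lemma isUnit_det (h : IsLocalMaxVol (fromBlocks M B C D) Sum.inl Sum.inl) : IsUnit M.det :=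
  isUnit_iff_ne_zero.mpr (abs_pos.mp (h.1.trans_eq (vol_eq_abs_det M)))

lemma abs_le_one_of_det_submatrix_eq (h : IsLocalMaxVol (fromBlocks M B C D) Sum.inl Sum.inl)
    {r : ι → ι ⊕ m} {c : ι → ι ⊕ n} (hr : DiffOne Sum.inl r) (hc : DiffOne Sum.inl c) {x : ℝ}
    (hx : ((fromBlocks M B C D).submatrix r c).det = M.det * x) : |x| ≤ 1 := by
  have det_pos : 0 < |M.det| := abs_pos.mpr h.isUnit_det.ne_zero
  have det_le : |M.det * x| ≤ |M.det| := hx ▸ h.abs_det_submatrix_le hr hc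
  rwa [abs_mul, mul_le_iff_le_one_right det_pos] at det_le

lemma abs_mul_inv_apply_le_one (h : IsLocalMaxVol (fromBlocks M B C D) Sum.inl Sum.inl)
    (p : m) (b : ι) : |(C * M⁻¹) p b| ≤ 1 := by
  refine h.abs_le_one_of_det_submatrix_eq (diffOne_update Sum.inl_injective b (x := Sum.inr p)
    (by simp)) (diffOne_self Sum.inl_injective) ?_
  rw [fromBlocks_submatrix_update_inl_left,
    det_updateRow_eq_det_mul_vecMul_inv h.isUnit_det, mul_apply_eq_vecMul]

lemma abs_inv_mul_apply_le_one (h : IsLocalMaxVol (fromBlocks M B C D) Sum.inl Sum.inl)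
    (a : ι) (q : n) : |(M⁻¹ * B) a q| ≤ 1 := by
  refine h.abs_le_one_of_det_submatrix_eq (diffOne_self Sum.inl_injective)
    (diffOne_update Sum.inl_injective a (x := Sum.inr q) (by simp)) ?_
  rw [fromBlocks_submatrix_update_inl_right,
    det_updateCol_eq_det_mul_inv_mulVec h.isUnit_det]
  rfl

lemma abs_schur_apply_mul_abs_inv_apply_le_two
    (h : IsLocalMaxVol (fromBlocks M B C D) Sum.inl Sum.inl) (a b : ι) (p : m) (q : n) :
    |(D - C * M⁻¹ * B) p q| * |M⁻¹ a b| ≤ 2 := by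
  have exchange : |(C * M⁻¹) p b * (M⁻¹ * B) a q + (D - C * M⁻¹ * B) p q * M⁻¹ a b| ≤ 1 := by
    refine h.abs_le_one_of_det_submatrix_eq (diffOne_update Sum.inl_injective b (x := Sum.inr p)
      (by simp)) (diffOne_update Sum.inl_injective a (x := Sum.inr q) (by simp)) ?_
    rw [fromBlocks_submatrix_update_inl_update_inl,
      det_updateRow_updateCol h.isUnit_det]
    rfl
  have product : |(C * M⁻¹) p b * (M⁻¹ * B) a q| ≤ 1 := by
    rw [abs_mul]
    exact mul_le_one₀ (h.abs_mul_inv_apply_le_one p b) (abs_nonneg _)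
      (h.abs_inv_mul_apply_le_one a q)
  rw [← abs_mul]
  grind

open scoped Matrix.Norms.L2Operator

lemma abs_schur_apply_le [Nonempty ι] (h : IsLocalMaxVol (fromBlocks M B C D) Sum.inl Sum.inl)
    (p : m) (q : n) : |(D - C * M⁻¹ * B) p q| ≤ 2 * Fintype.card ι * ‖M⁻¹‖⁻¹ := by
  have inv_ne_zero : M⁻¹ ≠ 0 :=
    (isUnit_nonsing_inv_iff.mpr ((isUnit_iff_isUnit_det M).mpr h.isUnit_det)).ne_zero
  rw [← div_eq_mul_inv, le_div_iff₀ (norm_pos_iff.mpr inv_ne_zero)]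
  calc
    |(D - C * M⁻¹ * B) p q| * ‖M⁻¹‖ = ‖(D - C * M⁻¹ * B) p q • M⁻¹‖ := by
      rw [norm_smul, Real.norm_eq_abs]
    _ ≤ √(Fintype.card ι * Fintype.card ι) * 2 :=
      l2_opNorm_le_sqrt_card_mul_of_norm_apply_le zero_le_two fun a b ↦ by
        rw [Matrix.smul_apply, norm_smul]
        exact h.abs_schur_apply_mul_abs_inv_apply_le_two a b p q
    _ = 2 * Fintype.card ι := by rw [Real.sqrt_mul_self (Nat.cast_nonneg _), mul_comm]

lemma norm_sub_fromBlocks_le [Fintype m] [Fintype n] [Nonempty ι]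
    (h : IsLocalMaxVol (fromBlocks M B C D) Sum.inl Sum.inl) :
    ‖fromBlocks M B C D - fromBlocks M B C (C * M⁻¹ * B)‖ ≤
      2 * Fintype.card ι *
        √((Fintype.card ι + Fintype.card m) * (Fintype.card ι + Fintype.card n)) * ‖M⁻¹‖⁻¹ := by
  have sub_eq : fromBlocks M B C D - fromBlocks M B C (C * M⁻¹ * B) =
      fromBlocks 0 0 0 (D - C * M⁻¹ * B) := by
    ext (i | p) (l | q) <;> simp
  have apply_le (i : ι ⊕ m) (l : ι ⊕ n) :
      ‖fromBlocks 0 0 0 (D - C * M⁻¹ * B) i l‖ ≤ 2 * Fintype.card ι * ‖M⁻¹‖⁻¹ := by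
    have zero_le : ‖(0 : ℝ)‖ ≤ 2 * Fintype.card ι * ‖M⁻¹‖⁻¹ := by
      rw [norm_zero]
      positivity
    obtain _ | p := i <;> obtain _ | q := l
    exacts [zero_le, zero_le, zero_le, h.abs_schur_apply_le p q]
  rw [sub_eq]
  refine (l2_opNorm_le_sqrt_card_mul_of_norm_apply_le (by positivity) apply_le).trans_eq ?_
  simp only [Fintype.card_sum, Nat.cast_add]
  ring

end IsLocalMaxVol

end LocalMaxVol

open scoped Matrix.Norms.L2Operator in
theorem statement_1_general {ι m n : Type*} [Fintype ι] [Fintype m] [Fintype n] [DecidableEq ι]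
    [DecidableEq m] [DecidableEq n] (A11 : Matrix ι ι ℝ) (A12 : Matrix ι n ℝ)
    (A21 : Matrix m ι ℝ) (A22 : Matrix m n ℝ)
    (h : IsLocalMaxVol (fromBlocks A11 A12 A21 A22) Sum.inl Sum.inl) {j : ℕ} (hj : 1 ≤ j)
    (hjι : j ≤ Fintype.card ι) :
    (1 / (1 + 2 * Fintype.card ι *
          √((Fintype.card ι + Fintype.card m) * (Fintype.card ι + Fintype.card n)))) *
        sval (fromBlocks A11 A12 A21 A22) j ≤
      sval (fromBlocks A11 A12 A21 (A21 * A11⁻¹ * A12)) j ∧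
    sval (fromBlocks A11 A12 A21 (A21 * A11⁻¹ * A12)) j ≤
      (1 + 2 * Fintype.card ι *
          √((Fintype.card ι + Fintype.card m) * (Fintype.card ι + Fintype.card n))) *
        sval (fromBlocks A11 A12 A21 A22) j := by
  have : Nonempty ι := Fintype.card_pos_iff.mp (by omega)
  have lower (D : Matrix m n ℝ) :=
    inv_norm_inv_le_sval_fromBlocks h.isUnit_det A12 A21 D hj hjι
  have upper := h.norm_sub_fromBlocks_le
  rw [one_div, inv_mul_le_iff₀ (by positivity)]
  exact ⟨sval_le_one_add_mul_sval hj (by positivity) upper (lower _),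
    sval_le_one_add_mul_sval hj (by positivity) ((norm_sub_rev _ _).trans_le upper) (lower _)⟩

theorem statement_1 {k m' n' : ℕ}
    (A11 : Matrix (Fin k) (Fin k) ℝ) (A12 : Matrix (Fin k) (Fin n') ℝ)
    (A21 : Matrix (Fin m') (Fin k) ℝ) (A22 : Matrix (Fin m') (Fin n') ℝ)
    (hinv : IsUnit A11.det)
    (hpos : 0 < vol A11)
    (hmax : ∀ (r : Fin k → Fin k ⊕ Fin m') (c : Fin k → Fin k ⊕ Fin n'),
      DiffOne Sum.inl r → DiffOne Sum.inl c →
      vol ((Matrix.fromBlocks A11 A12 A21 A22).submatrix r c) ≤ vol A11) :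
    ∀ j : ℕ, 1 ≤ j → j ≤ k →
      (1 / (1 + 5 * k * Real.sqrt ((k + m') * (k + n')))) *
          sval (Matrix.fromBlocks A11 A12 A21 A22) j ≤
        sval (Matrix.fromBlocks A11 A12 A21 (A21 * A11⁻¹ * A12)) j ∧
      sval (Matrix.fromBlocks A11 A12 A21 (A21 * A11⁻¹ * A12)) j ≤
        (1 + 5 * k * Real.sqrt ((k + m') * (k + n'))) *
          sval (Matrix.fromBlocks A11 A12 A21 A22) j := by
  intro j hj hjk
  have bound := statement_1_general A11 A12 A21 A22 ⟨hpos, hmax⟩ hj (by simpa using hjk)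
  simp only [Fintype.card_fin] at bound
  have nonneg := sval_nonneg (fromBlocks A11 A12 A21 A22) j
  refine ⟨le_trans ?_ bound.1, bound.2.trans ?_⟩ <;> gcongr <;> norm_num
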